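/- arXiv:1401.4532 — 2 statements merged into one kernel-verified Lean document; each statement's English description precedes it below -/
import Mathlib

section
/- Monotonicity of the entropy gap to the Gaussian: for every α > 0 and all σ₁, σ₂ with 0 < σ₁ ≤ σ₂, (1/2)·log(2πeσ₁²) − h(α,σ₁) ≤ (1/2)·log(2πeσ₂²) − h(α,σ₂); in particular, with σ_b ≤ σ_e, the quantity ε_e − ε_b appearing in the secrecy-rate computation is nonnegative, where ε_b = (1/2)log(2πeσ_b²) − h(α,σ_b) and ε_e = (1/2)log(2πeσ_e²) − h(α,σ_e). -/
open MeasureTheory Real Filter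

/-- The Gaussian density with zero mean and standard deviation `σ`. -/
noncomputable def gaussDen (σ x : ℝ) : ℝ :=
  (Real.sqrt (2 * Real.pi * σ ^ 2))⁻¹ * Real.exp (-x ^ 2 / (2 * σ ^ 2))

/-- The `αℤ`-aliased Gaussian density `f_{σ,α}(x) = Σ_{k∈ℤ} g_σ(x − kα)`. -/
noncomputable def aliasedDen (σ α x : ℝ) : ℝ := ∑' k : ℤ, gaussDen σ (x - (k : ℝ) * α)

/-- The differential entropy `h(α,σ)` of the `αℤ`-aliased Gaussian noise
on the fundamental region `[0, α)`. -/
noncomputable def aliasedEnt (α σ : ℝ) : ℝ :=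
  -∫ x in Set.Ico (0 : ℝ) α, aliasedDen σ α x * Real.log (aliasedDen σ α x)

open ProbabilityTheory

lemma gaussDen_eq (σ x : ℝ) : gaussDen σ x = gaussianPDFReal 0 (Real.toNNReal (σ ^ 2)) x := by
  simp [gaussDen, gaussianPDFReal, Real.coe_toNNReal _ (sq_nonneg σ)]

lemma gaussDen_pos {σ : ℝ} (hσ : 0 < σ) (x : ℝ) : 0 < gaussDen σ x := by
  unfold gaussDen; positivity

lemma gaussDen_meas (σ : ℝ) : Measurable (gaussDen σ) := by
  unfold gaussDen; fun_prop

lemma gaussDen_bound {σ α : ℝ} (hσ : 0 < σ) (hα : 0 < α) :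
    ∃ B : ℤ → ℝ, Summable B ∧ ∀ x ∈ Set.Ico 0 α, ∀ k : ℤ, gaussDen σ (x - k * α) ≤ B k := by
  set c : ℝ := α ^ 2 / (4 * σ ^ 2) with hc
  have hcpos : 0 < c := by positivity
  refine ⟨fun k => ((Real.sqrt (2 * Real.pi * σ ^ 2))⁻¹ * Real.exp (α ^ 2 / (2 * σ ^ 2))) *
    Real.exp (-c * (k : ℝ) ^ 2), ?_, ?_⟩
  · apply Summable.mul_left
    have key : Summable fun n : ℕ => Real.exp (-c * (n : ℝ) ^ 2) := by
      refine Real.summable_exp_nat_mul_of_ge (by linarith) (f := fun n : ℕ => (n : ℝ) ^ 2) ?_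
      intro i
      have : i ≤ i ^ 2 := Nat.le_self_pow (by norm_num) i
      exact_mod_cast this
    apply Summable.of_nat_of_neg <;> simpa using key
  · intro x hx k
    simp only [gaussDen]
    rw [mul_assoc (Real.sqrt _)⁻¹, ← Real.exp_add]
    gcongr
    have h1 : -c * (k : ℝ) ^ 2 = -(k * α) ^ 2 / 2 / (2 * σ ^ 2) := by
      rw [hc]; field_simp; ring
    rw [h1, ← add_div]
    gcongr
    obtain ⟨h0, h2⟩ := hx
    have : x ^ 2 ≤ α ^ 2 := by gcongr
    nlinarith [sq_nonneg (2 * x - k * α)]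

lemma aliasedDen_periodic (σ α x : ℝ) (n : ℤ) : aliasedDen σ α (x + n * α) = aliasedDen σ α x := by
  unfold aliasedDen
  rw [← (Equiv.addRight n).tsum_eq]
  congr 1; ext k; congr 1; simp; ring

lemma exists_shift {α : ℝ} (hα : 0 < α) (x : ℝ) : ∃ n : ℤ, x + n * α ∈ Set.Ico 0 α := by
  refine ⟨-toIcoDiv hα 0 x, ?_⟩
  have := sub_toIcoDiv_zsmul_mem_Ico hα 0 x
  simpa [sub_eq_add_neg] using this

lemma gaussDen_summable {σ α : ℝ} (hσ : 0 < σ) (hα : 0 < α) (x : ℝ) :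
    Summable fun k : ℤ => gaussDen σ (x - k * α) := by
  obtain ⟨B, hB, hb⟩ := gaussDen_bound hσ hα
  obtain ⟨n, hn⟩ := exists_shift hα x
  have h := Summable.of_nonneg_of_le (fun k => (gaussDen_pos hσ _).le) (hb _ hn) hB
  rw [← (Equiv.addRight n).summable_iff] at h
  convert! h using 1
  ext k; simp only [Function.comp]; congr 1; simp; ring

lemma aliasedDen_bounds {σ α : ℝ} (hσ : 0 < σ) (hα : 0 < α) :
    ∃ m M : ℝ, 0 < m ∧ ∀ x, m ≤ aliasedDen σ α x ∧ aliasedDen σ α x ≤ M := by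
  obtain ⟨B, hB, hb⟩ := gaussDen_bound hσ hα
  refine ⟨gaussDen σ α, ∑' k, B k, gaussDen_pos hσ _, fun x => ?_⟩
  obtain ⟨n, hn⟩ := exists_shift hα x
  rw [← aliasedDen_periodic σ α x n]
  constructor
  · refine le_trans ?_ ((gaussDen_summable hσ hα (x + n * α)).le_tsum 0
      (fun k _ => (gaussDen_pos hσ _).le))
    obtain ⟨h0, h2⟩ := hn
    unfold gaussDen
    simp only [Int.cast_zero, zero_mul, sub_zero]
    gcongr
  · exact (gaussDen_summable hσ hα _).tsum_le_tsum (hb _ hn) hB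

lemma aliasedDen_ofReal {σ α : ℝ} (hσ : 0 < σ) (hα : 0 < α) (x : ℝ) :
    ENNReal.ofReal (aliasedDen σ α x) = ∑' k : ℤ, ENNReal.ofReal (gaussDen σ (x - k * α)) :=
  ENNReal.ofReal_tsum_of_nonneg (fun k => (gaussDen_pos hσ _).le) (gaussDen_summable hσ hα x)

lemma aliasedDen_pos {σ α : ℝ} (hσ : 0 < σ) (hα : 0 < α) (x : ℝ) : 0 < aliasedDen σ α x := by
  obtain ⟨m, M, hm, h⟩ := aliasedDen_bounds hσ hα
  exact hm.trans_le (h x).1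

lemma aliasedDen_meas {σ α : ℝ} (hσ : 0 < σ) (hα : 0 < α) : Measurable (aliasedDen σ α) := by
  have : aliasedDen σ α = fun x =>
      (∑' k : ℤ, ENNReal.ofReal (gaussDen σ (x - k * α))).toReal := by
    ext x
    rw [← aliasedDen_ofReal hσ hα, ENNReal.toReal_ofReal (aliasedDen_pos hσ hα x).le]
  rw [this]
  refine Measurable.ennreal_toReal (Measurable.tsum fun k => ?_)
  exact ((gaussDen_meas σ).comp (by fun_prop)).ennreal_ofReal

lemma hasSum_unfold {α : ℝ} (hα : 0 < α) {h : ℝ → ℝ} (hi : Integrable h) :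
    HasSum (fun n : ℤ => ∫ x in Set.Ico 0 α, h (x - n * α)) (∫ x, h x) := by
  have h1 := hasSum_integral_iUnion (μ := volume) (f := h)
    (s := fun n : ℤ => Set.Ico (n • α) ((n + 1) • α))
    (fun i => measurableSet_Ico) (Set.pairwise_disjoint_Ico_zsmul α) hi.integrableOn
  rw [iUnion_Ico_zsmul hα, setIntegral_univ] at h1
  rw [← (Equiv.neg ℤ).hasSum_iff]
  convert! h1 using 1
  ext n
  simp only [Function.comp, Equiv.neg_apply, Int.cast_neg, neg_mul, sub_neg_eq_add]
  have := (measurePreserving_add_right volume ((n : ℝ) * α)).setIntegral_preimage_emb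
    (measurableEmbedding_addRight _) h (Set.Ico (n • α) ((n + 1) • α))
  rw [← this]
  congr 2
  ext x
  simp [add_mul]

lemma unfold_integral {σ α : ℝ} (hα : 0 < α) {φ : ℝ → ℝ}
    (hi : Integrable fun x => gaussDen σ x * φ x) (hp : ∀ x, ∀ n : ℤ, φ (x - n * α) = φ x) :
    ∫ x, gaussDen σ x * φ x = ∫ x in Set.Ico 0 α, aliasedDen σ α x * φ x := by
  have h1 := hasSum_unfold hα hi
  have h2 := hasSum_unfold hα hi.norm
  rw [← h1.tsum_eq, integral_tsum_of_summable_integral_norm]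
  · congr 1; ext x; simp only [hp]; rw [tsum_mul_right]; rfl
  · intro n
    exact (hi.comp_sub_right _).integrableOn
  · exact h2.summable

lemma v_ne {σ : ℝ} (hσ : 0 < σ) : Real.toNNReal (σ ^ 2) ≠ 0 := by
  simp; positivity

lemma log_gaussDen {σ : ℝ} (hσ : 0 < σ) (x : ℝ) :
    Real.log (gaussDen σ x) = -(1 / 2) * Real.log (2 * Real.pi * σ ^ 2) - x ^ 2 / (2 * σ ^ 2) := by
  unfold gaussDen
  rw [Real.log_mul (by positivity) (by positivity), Real.log_inv, Real.log_sqrt (by positivity),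
    Real.log_exp]
  ring

lemma integrable_sq_gauss (v : NNReal) : Integrable (fun x : ℝ => x ^ 2) (gaussianReal 0 v) := by
  have := (memLp_id_gaussianReal (μ := 0) (v := v) 2).integrable_sq
  simpa using this

lemma integral_sq_gauss (v : NNReal) : ∫ x : ℝ, x ^ 2 ∂(gaussianReal 0 v) = v := by
  have h := variance_fun_id_gaussianReal (μ := 0) (v := v)
  rw [variance_eq_integral (by fun_prop)] at h
  simpa using h

lemma integrable_log_aliased {σ α : ℝ} (hσ : 0 < σ) (hα : 0 < α) (v : NNReal) :
    Integrable (fun x => Real.log (aliasedDen σ α x)) (gaussianReal 0 v) := by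
  obtain ⟨m, M, hm, h⟩ := aliasedDen_bounds hσ hα
  refine Integrable.of_bound (C := max |Real.log m| |Real.log M|)
    (aliasedDen_meas hσ hα).log.aestronglyMeasurable (ae_of_all _ fun x => ?_)
  rw [Real.norm_eq_abs]
  exact abs_le_max_abs_abs (Real.log_le_log hm (h x).1)
    (Real.log_le_log (aliasedDen_pos hσ hα x) (h x).2)

lemma integrable_log_gauss {σ : ℝ} (hσ : 0 < σ) (v : NNReal) :
    Integrable (fun x => Real.log (gaussDen σ x)) (gaussianReal 0 v) := by
  simp only [log_gaussDen hσ]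
  exact (integrable_const _).sub ((integrable_sq_gauss v).div_const _)

lemma integral_log_gauss {σ : ℝ} (hσ : 0 < σ) :
    ∫ x, Real.log (gaussDen σ x) ∂(gaussianReal 0 (Real.toNNReal (σ ^ 2))) =
      -(1 / 2) * Real.log (2 * Real.pi * Real.exp 1 * σ ^ 2) := by
  simp only [log_gaussDen hσ]
  rw [integral_sub (integrable_const _) ((integrable_sq_gauss _).div_const _), integral_div,
    integral_sq_gauss, Real.coe_toNNReal _ (sq_nonneg σ)]
  rw [show 2 * Real.pi * Real.exp 1 * σ ^ 2 = (2 * Real.pi * σ ^ 2) * Real.exp 1 by ring,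
    Real.log_mul (x := 2 * Real.pi * σ ^ 2) (by positivity) (by positivity), Real.log_exp]
  simp
  field_simp
  ring

lemma integral_log_aliased {σ α : ℝ} (hσ : 0 < σ) (hα : 0 < α) :
    ∫ x, Real.log (aliasedDen σ α x) ∂(gaussianReal 0 (Real.toNNReal (σ ^ 2))) =
      -aliasedEnt α σ := by
  have hi := integrable_log_aliased hσ hα (Real.toNNReal (σ ^ 2))
  rw [integral_gaussianReal_eq_integral_smul (v_ne hσ)]
  simp only [← gaussDen_eq, smul_eq_mul]
  rw [unfold_integral (α := α) hα, aliasedEnt, neg_neg]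
  · rw [gaussianReal_of_var_ne_zero _ (v_ne hσ), integrable_withDensity_iff_integrable_smul'
      (measurable_gaussianPDF _ _) (ae_of_all _ fun _ => gaussianPDF_lt_top)] at hi
    simpa [toReal_gaussianPDF, ← gaussDen_eq] using hi
  · intro x n
    have := aliasedDen_periodic σ α x (-n)
    push_cast at this
    rw [sub_eq_add_neg, ← neg_mul, this]

lemma lintegral_gauss {σ : ℝ} (hσ : 0 < σ) {ψ : ℝ → ENNReal} (hψ : Measurable ψ) :
    ∫⁻ x, ψ x ∂(gaussianReal 0 (Real.toNNReal (σ ^ 2))) =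
      ∫⁻ x, ENNReal.ofReal (gaussDen σ x) * ψ x := by
  rw [gaussianReal_of_var_ne_zero _ (v_ne hσ),
    lintegral_withDensity_eq_lintegral_mul _ (measurable_gaussianPDF _ _) hψ]
  simp only [Pi.mul_apply, gaussianPDF, ← gaussDen_eq]

lemma lintegral_aliased {σ α : ℝ} (hσ : 0 < σ) (hα : 0 < α) {ψ : ℝ → ENNReal}
    (hψ : Measurable ψ) :
    ∫⁻ x, ENNReal.ofReal (aliasedDen σ α x) * ψ x =
      ∑' k : ℤ, ∫⁻ x, ψ (x + k * α) ∂(gaussianReal 0 (Real.toNNReal (σ ^ 2))) := by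
  simp only [aliasedDen_ofReal hσ hα, ← ENNReal.tsum_mul_right]
  rw [lintegral_tsum]
  · congr 1; ext k
    rw [lintegral_gauss hσ (ψ := fun x => ψ (x + k * α)) (hψ.comp (by fun_prop)),
      ← lintegral_sub_right_eq_self
        (fun x => ENNReal.ofReal (gaussDen σ x) * ψ (x + k * α)) ((k : ℝ) * α)]
    simp
  · intro k
    exact (((gaussDen_meas σ).comp (by fun_prop)).ennreal_ofReal.mul hψ).aemeasurable

lemma lintegral_ratio {α σ₁ σ₂ : ℝ} (hα : 0 < α) (hσ₁ : 0 < σ₁) (h12 : σ₁ ≤ σ₂) :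
    ∫⁻ p : ℝ × ℝ, ENNReal.ofReal (gaussDen σ₂ (p.1 + p.2) * aliasedDen σ₁ α p.2 /
        (aliasedDen σ₂ α (p.1 + p.2) * gaussDen σ₁ p.2))
      ∂((gaussianReal 0 (Real.toNNReal (σ₂ ^ 2 - σ₁ ^ 2))).prod
        (gaussianReal 0 (Real.toNNReal (σ₁ ^ 2)))) = 1 := by
  have hσ₂ : 0 < σ₂ := hσ₁.trans_le h12
  set ψ : ℝ → ENNReal := fun u => ENNReal.ofReal (gaussDen σ₂ u / aliasedDen σ₂ α u) with hψd
  have m1 := gaussDen_meas σ₁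
  have m2 := gaussDen_meas σ₂
  have m3 := aliasedDen_meas hσ₁ hα
  have m4 := aliasedDen_meas hσ₂ hα
  have hψ : Measurable ψ := (m2.div m4).ennreal_ofReal
  have hconv : gaussianReal 0 (Real.toNNReal (σ₂ ^ 2)) =
      (gaussianReal 0 (Real.toNNReal (σ₂ ^ 2 - σ₁ ^ 2))).conv
        (gaussianReal 0 (Real.toNNReal (σ₁ ^ 2))) := by
    rw [gaussianReal_conv_gaussianReal, ← Real.toNNReal_add (by nlinarith) (by positivity)]
    simp
  rw [lintegral_prod _ (by fun_prop)]
  have step : ∀ w : ℝ, ∫⁻ y, ENNReal.ofReal (gaussDen σ₂ (w + y) * aliasedDen σ₁ α y /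
        (aliasedDen σ₂ α (w + y) * gaussDen σ₁ y)) ∂(gaussianReal 0 (Real.toNNReal (σ₁ ^ 2))) =
      ∑' k : ℤ, ∫⁻ y, ψ (w + y + k * α) ∂(gaussianReal 0 (Real.toNNReal (σ₁ ^ 2))) := by
    intro w
    rw [lintegral_gauss hσ₁ (by fun_prop)]
    have := lintegral_aliased hσ₁ hα (ψ := fun y => ψ (w + y)) (hψ.comp (by fun_prop))
    simp only [← add_assoc] at this
    rw [← this]
    congr 1; ext y
    rw [← ENNReal.ofReal_mul (gaussDen_pos hσ₁ y).le,
      ← ENNReal.ofReal_mul (aliasedDen_pos hσ₁ hα y).le]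
    congr 1
    have := gaussDen_pos hσ₁ y
    have := aliasedDen_pos hσ₂ hα (w + y)
    field_simp
  simp only [step]
  rw [lintegral_tsum]
  · have : ∀ k : ℤ, ∫⁻ w, ∫⁻ y, ψ (w + y + k * α) ∂(gaussianReal 0 (Real.toNNReal (σ₁ ^ 2)))
        ∂(gaussianReal 0 (Real.toNNReal (σ₂ ^ 2 - σ₁ ^ 2))) =
        ∫⁻ u, ψ (u + k * α) ∂(gaussianReal 0 (Real.toNNReal (σ₂ ^ 2))) := by
      intro k
      rw [hconv, Measure.lintegral_conv (f := fun u => ψ (u + k * α)) (hψ.comp (by fun_prop))]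
    simp only [this]
    rw [← lintegral_aliased hσ₂ hα hψ]
    rw [← lintegral_gaussianPDFReal_eq_one 0 (v_ne hσ₂)]
    congr 1; ext u
    rw [← ENNReal.ofReal_mul (aliasedDen_pos hσ₂ hα u).le, ← gaussDen_eq]
    congr 1
    have := aliasedDen_pos hσ₂ hα u
    field_simp
  · intro k
    refine Measurable.aemeasurable ?_
    exact Measurable.lintegral_prod_right' (f := fun p : ℝ × ℝ => ψ (p.1 + p.2 + k * α))
      (hψ.comp (by fun_prop))

/-- monotonicity of the entropy gap to the Gaussian:
`(1/2)·log(2πeσ₁²) − h(α,σ₁) ≤ (1/2)·log(2πeσ₂²) − h(α,σ₂)` for `0 < σ₁ ≤ σ₂`;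
in particular `ε_e − ε_b ≥ 0` when `σ_b ≤ σ_e`. -/
theorem entropy_gap_mono_in_sigma (α σ₁ σ₂ : ℝ) (hα : 0 < α) (hσ₁ : 0 < σ₁)
    (h12 : σ₁ ≤ σ₂) :
    (1 / 2 : ℝ) * Real.log (2 * Real.pi * Real.exp 1 * σ₁ ^ 2) - aliasedEnt α σ₁ ≤
      (1 / 2 : ℝ) * Real.log (2 * Real.pi * Real.exp 1 * σ₂ ^ 2) - aliasedEnt α σ₂ := by
  have hσ₂ : 0 < σ₂ := hσ₁.trans_le h12
  have m1 := gaussDen_meas σ₁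
  have m2 := gaussDen_meas σ₂
  have m3 := aliasedDen_meas hσ₁ hα
  have m4 := aliasedDen_meas hσ₂ hα
  have hlin := lintegral_ratio hα hσ₁ h12
  have hconv : gaussianReal 0 (Real.toNNReal (σ₂ ^ 2)) =
      (gaussianReal 0 (Real.toNNReal (σ₂ ^ 2 - σ₁ ^ 2))).conv
        (gaussianReal 0 (Real.toNNReal (σ₁ ^ 2))) := by
    rw [gaussianReal_conv_gaussianReal, ← Real.toNNReal_add (by nlinarith) (by positivity)]
    simp
  have i1 := (integrable_log_gauss hσ₁ (Real.toNNReal (σ₁ ^ 2))).sub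
    (integrable_log_aliased hσ₁ hα (Real.toNNReal (σ₁ ^ 2)))
  have i2 := (integrable_log_gauss hσ₂ (Real.toNNReal (σ₂ ^ 2))).sub
    (integrable_log_aliased hσ₂ hα (Real.toNNReal (σ₂ ^ 2)))
  have e1 : ∫ x, (Real.log (gaussDen σ₁ x) - Real.log (aliasedDen σ₁ α x))
      ∂(gaussianReal 0 (Real.toNNReal (σ₁ ^ 2))) = _ :=
    integral_sub (integrable_log_gauss hσ₁ (Real.toNNReal (σ₁ ^ 2)))
      (integrable_log_aliased hσ₁ hα (Real.toNNReal (σ₁ ^ 2)))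
  have e2 : ∫ x, (Real.log (gaussDen σ₂ x) - Real.log (aliasedDen σ₂ α x))
      ∂(gaussianReal 0 (Real.toNNReal (σ₂ ^ 2))) = _ :=
    integral_sub (integrable_log_gauss hσ₂ (Real.toNNReal (σ₂ ^ 2)))
      (integrable_log_aliased hσ₂ hα (Real.toNNReal (σ₂ ^ 2)))
  rw [integral_log_gauss hσ₁, integral_log_aliased hσ₁ hα] at e1
  rw [integral_log_gauss hσ₂, integral_log_aliased hσ₂ hα] at e2
  rw [hconv] at e2 i2
  set ν := gaussianReal 0 (Real.toNNReal (σ₂ ^ 2 - σ₁ ^ 2))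
  set μ := gaussianReal 0 (Real.toNNReal (σ₁ ^ 2))
  have j2 : Integrable (fun p : ℝ × ℝ => Real.log (gaussDen σ₂ (p.1 + p.2)) -
      Real.log (aliasedDen σ₂ α (p.1 + p.2))) (ν.prod μ) :=
    i2.comp_measurable (f := fun p : ℝ × ℝ => p.1 + p.2) (by fun_prop)
  have j1 : Integrable (fun p : ℝ × ℝ => Real.log (gaussDen σ₁ p.2) -
      Real.log (aliasedDen σ₁ α p.2)) (ν.prod μ) := i1.comp_snd ν
  have f1 : ∫ p : ℝ × ℝ, (Real.log (gaussDen σ₁ p.2) -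
      Real.log (aliasedDen σ₁ α p.2)) ∂(ν.prod μ) = ∫ x, (Real.log (gaussDen σ₁ x) -
      Real.log (aliasedDen σ₁ α x)) ∂μ := by
    rw [integral_fun_snd (f := fun x => Real.log (gaussDen σ₁ x) -
      Real.log (aliasedDen σ₁ α x))]
    simp
  have f2 : ∫ x, (Real.log (gaussDen σ₂ x) - Real.log (aliasedDen σ₂ α x)) ∂(ν.conv μ) =
      ∫ p : ℝ × ℝ, (Real.log (gaussDen σ₂ (p.1 + p.2)) -
      Real.log (aliasedDen σ₂ α (p.1 + p.2))) ∂(ν.prod μ) := by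
    rw [Measure.conv, integral_map (by fun_prop) (by fun_prop)]
  set R : ℝ × ℝ → ℝ := fun p => gaussDen σ₂ (p.1 + p.2) * aliasedDen σ₁ α p.2 /
        (aliasedDen σ₂ α (p.1 + p.2) * gaussDen σ₁ p.2) with hR
  have Rm : Measurable R := by fun_prop
  have Rpos : ∀ p, 0 < R p := fun p =>
    div_pos (mul_pos (gaussDen_pos hσ₂ _) (aliasedDen_pos hσ₁ hα _))
      (mul_pos (aliasedDen_pos hσ₂ hα _) (gaussDen_pos hσ₁ _))
  have Ri : Integrable R (ν.prod μ) := by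
    refine ⟨Rm.aestronglyMeasurable, ?_⟩
    rw [hasFiniteIntegral_iff_ofReal (ae_of_all _ fun p => (Rpos p).le)]
    exact hlin.trans_lt ENNReal.one_lt_top
  have Re : ∫ p, R p ∂(ν.prod μ) = 1 := by
    rw [integral_eq_lintegral_of_nonneg_ae (ae_of_all _ fun p => (Rpos p).le)
      Rm.aestronglyMeasurable]
    rw [hR, hlin]; simp
  have main : ∫ p, (1 - R p) ∂(ν.prod μ) ≤ ∫ p : ℝ × ℝ, ((Real.log (gaussDen σ₁ p.2) -
      Real.log (aliasedDen σ₁ α p.2)) - (Real.log (gaussDen σ₂ (p.1 + p.2)) -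
      Real.log (aliasedDen σ₂ α (p.1 + p.2)))) ∂(ν.prod μ) := by
    refine integral_mono ((integrable_const _).sub Ri) (j1.sub j2) fun p => ?_
    have h := Real.log_le_sub_one_of_pos (Rpos p)
    simp only [hR] at h ⊢
    have a1 := (gaussDen_pos hσ₁ p.2).ne'
    have a2 := (gaussDen_pos hσ₂ (p.1 + p.2)).ne'
    have a3 := (aliasedDen_pos hσ₁ hα p.2).ne'
    have a4 := (aliasedDen_pos hσ₂ hα (p.1 + p.2)).ne'
    rw [Real.log_div (mul_ne_zero a2 a3) (mul_ne_zero a4 a1), Real.log_mul a2 a3,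
      Real.log_mul a4 a1] at h
    linarith
  rw [integral_sub (integrable_const _) Ri, integral_sub j1 j2, Re, f1, ← f2, e1, e2] at main
  simp at main
  linarith
end

section
/- Per-level capacity degradation: for every α > 0 and all σ_b, σ_e with 0 < σ_b ≤ σ_e, the capacity of the αℤ/2αℤ partition channel at noise level σ_b is at least its capacity at noise level σ_e, i.e., h(α,σ_b) − h(2α,σ_b) + log 2 ≥ h(α,σ_e) − h(2α,σ_e) + log 2; hence the per-level secrecy rate C(V_i) − C(W_i) of the wiretap construction is nonnegative at every level. -/
open MeasureTheory Real Filter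

/-- The capacity `C(α,σ) = h(α,σ) − h(2α,σ) + log 2` of the binary partition channel
`αℤ/2αℤ` with Gaussian noise of variance `σ²`. -/
noncomputable def partCap (α σ : ℝ) : ℝ :=
  aliasedEnt α σ - aliasedEnt (2 * α) σ + Real.log 2


lemma g_pos {σ : ℝ} (h : 0 < σ) (x : ℝ) : 0 < gaussDen σ x := by
  unfold gaussDen; positivity

lemma g_cont (σ : ℝ) : Continuous (gaussDen σ) := by
  unfold gaussDen; fun_prop

lemma summable_sq {c : ℝ} (hc : 0 < c) : Summable fun k : ℤ => Real.exp (-c * (k:ℝ)^2) := by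
  have h := (summable_jacobiTheta₂_term_iff 0 (Complex.I * (c / π : ℝ))).2 (by
    simp; positivity)
  have h2 := h.norm
  refine h2.congr fun k => ?_
  rw [norm_jacobiTheta₂_term]
  congr 1
  simp
  field_simp

lemma g_bound {σ a R : ℝ} (h : 0 < σ) (x : ℝ) (hx : |x| ≤ R) (k : ℤ) :
    gaussDen σ (x - k * a) ≤ ((Real.sqrt (2 * Real.pi * σ ^ 2))⁻¹ * Real.exp (R^2 / (2 * σ^2))) *
      Real.exp (-(a^2 / (4 * σ^2)) * (k:ℝ)^2) := by
  unfold gaussDen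
  rw [mul_assoc _ (rexp _), ← Real.exp_add]
  gcongr
  have : x^2 ≤ R^2 := sq_le_sq' (by linarith [abs_le.1 hx]) (abs_le.1 hx).2
  have e : R ^ 2 / (2 * σ ^ 2) + -(a ^ 2 / (4 * σ ^ 2)) * (k:ℝ) ^ 2 =
    (R^2 - a^2 * k^2 / 2) / (2 * σ^2) := by field_simp; ring
  rw [e]
  gcongr
  nlinarith [sq_nonneg (2 * x - k * a)]

lemma bound_summable {σ a : ℝ} (h : 0 < σ) (ha : 0 < a) (C : ℝ) :
    Summable fun k : ℤ => C * Real.exp (-(a^2 / (4 * σ^2)) * (k:ℝ)^2) :=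
  (summable_sq (by positivity)).mul_left _

lemma g_summable {σ a : ℝ} (h : 0 < σ) (ha : 0 < a) (x : ℝ) :
    Summable fun k : ℤ => gaussDen σ (x - (k:ℝ) * a) :=
  Summable.of_nonneg_of_le (fun k => (g_pos h _).le) (g_bound h x le_rfl)
    (bound_summable h ha _)

lemma F_cont {σ a : ℝ} (h : 0 < σ) (ha : 0 < a) : Continuous (aliasedDen σ a) := by
  rw [continuous_iff_continuousAt]
  intro x
  have : ContinuousOn (aliasedDen σ a) (Set.Icc (x-1) (x+1)) := by
    unfold aliasedDen
    refine continuousOn_tsum (fun k => ?_) (bound_summable h ha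
      ((Real.sqrt (2 * Real.pi * σ ^ 2))⁻¹ * Real.exp ((|x|+1)^2 / (2 * σ^2)))) ?_
    · exact ((g_cont σ).comp (by fun_prop)).continuousOn
    · intro k y hy
      rw [Real.norm_of_nonneg (g_pos h _).le]
      refine g_bound h y ?_ k
      rw [abs_le]
      constructor <;> linarith [hy.1, hy.2, neg_abs_le x, le_abs_self x]
  exact this.continuousAt (Icc_mem_nhds (by linarith) (by linarith))

lemma F_pos {σ a : ℝ} (h : 0 < σ) (ha : 0 < a) (x : ℝ) : 0 < aliasedDen σ a x :=
  (g_summable h ha x).tsum_pos (fun k => (g_pos h _).le) 0 (g_pos h _)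

lemma F_per (σ a x : ℝ) : aliasedDen σ a (x + a) = aliasedDen σ a x := by
  unfold aliasedDen
  rw [← (Equiv.addRight (1:ℤ)).tsum_eq]
  congr 1; ext k
  simp only [Equiv.coe_addRight]
  push_cast
  ring_nf

lemma F_split {σ a : ℝ} (h : 0 < σ) (ha : 0 < a) (x : ℝ) :
    aliasedDen σ a x = aliasedDen σ (2*a) x + aliasedDen σ (2*a) (x + a) := by
  have e : aliasedDen σ (2*a) (x + a) = aliasedDen σ (2*a) (x - a) := by
    rw [← F_per σ (2*a) (x - a)]; ring_nf
  rw [e]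
  have h1 := (g_summable h (by positivity : 0 < 2*a) x).hasSum
  have h2 := (g_summable h (by positivity : 0 < 2*a) (x-a)).hasSum
  have i1 : Function.Injective (fun k : ℤ => 2 * k) := fun p q h => by simpa using h
  have i2 : Function.Injective (fun k : ℤ => 2 * k + 1) := fun p q h => by simpa using h
  have hc : IsCompl (Set.range (fun k : ℤ => 2 * k)) (Set.range (fun k : ℤ => 2 * k + 1)) := by
    rw [isCompl_iff, Set.disjoint_iff_forall_ne, codisjoint_iff]
    constructor
    · rintro _ ⟨p, rfl⟩ _ ⟨q, rfl⟩
      simp only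
      omega
    · change Set.range _ ∪ Set.range _ = Set.univ
      ext n
      simp only [Set.mem_union, Set.mem_range, Set.mem_univ, iff_true]
      rcases Int.even_or_odd' n with ⟨m, hm | hm⟩
      · exact Or.inl ⟨m, hm.symm⟩
      · exact Or.inr ⟨m, hm.symm⟩
  have k1 : HasSum ((fun k : ℤ => gaussDen σ (x - (k:ℝ) * a)) ∘ (fun k : ℤ => 2 * k))
      (aliasedDen σ (2*a) x) := by
    convert! h1 using 2 with k
    simp only [Function.comp]; push_cast; ring_nf
  have k2 : HasSum ((fun k : ℤ => gaussDen σ (x - (k:ℝ) * a)) ∘ (fun k : ℤ => 2 * k + 1))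
      (aliasedDen σ (2*a) (x - a)) := by
    convert! h2 using 2 with k
    simp only [Function.comp]; push_cast; ring_nf
  exact (HasSum.add_isCompl hc (i1.hasSum_range_iff.2 k1) (i2.hasSum_range_iff.2 k2)).tsum_eq

lemma g_conv {b t e : ℝ} (hb : 0 < b) (ht : 0 < t) (he : 0 < e) (hh : e^2 = b^2 + t^2) (x : ℝ) :
    Integrable (fun s => gaussDen b (x - s) * gaussDen t s) ∧
    ∫ s, gaussDen b (x - s) * gaussDen t s = gaussDen e x := by
  have key : (fun s => gaussDen b (x - s) * gaussDen t s) = fun s =>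
      ((Real.sqrt (2 * Real.pi * b ^ 2))⁻¹ * (Real.sqrt (2 * Real.pi * t ^ 2))⁻¹ *
        Real.exp (-x ^ 2 / (2 * e ^ 2))) *
        Real.exp (-(e^2 / (2 * b^2 * t^2)) * (s - x * t^2 / e^2)^2) := by
    ext s
    unfold gaussDen
    have : ∀ A B C D E G : ℝ, C + D = E + G → (A * rexp C) * (B * rexp D) =
      (A * B * rexp E) * rexp G := by
      intro A B C D E G h
      rw [mul_assoc (A * B), ← Real.exp_add, ← h, Real.exp_add]; ring
    apply this
    have hb2 : b^2 = e^2 - t^2 := by linarith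
    have hb' : e^2 - t^2 ≠ 0 := by rw [← hb2]; positivity
    rw [hb2]
    field_simp
    ring
  rw [key]
  constructor
  · exact ((integrable_exp_neg_mul_sq (by positivity)).comp_sub_right _).const_mul _
  · rw [integral_const_mul, integral_sub_right_eq_self (fun s => rexp (-(e^2 / (2 * b^2 * t^2)) * s^2)),
      integral_gaussian]
    unfold gaussDen
    rw [mul_right_comm]
    congr 1
    rw [← Real.sqrt_inv, ← Real.sqrt_inv, ← Real.sqrt_inv, ← Real.sqrt_mul (by positivity),
      ← Real.sqrt_mul (by positivity)]
    congr 1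
    field_simp
    try ring

lemma gibbs {a b c d : ℝ} (ha : 0 < a) (hb : 0 < b) (hc : 0 < c) (hd : 0 < d) :
    a * (log c - log (c+d)) + b * (log d - log (c+d)) ≤
      a * log a + b * log b - (a+b) * log (a+b) := by
  have aux : ∀ a c S T : ℝ, 0 < a → 0 < c → 0 < S → 0 < T →
      a * (log c - log T + log S - log a) ≤ c * S / T - a := by
    intro a c S T ha hc hS hT
    have := Real.log_le_sub_one_of_pos (x := c * S / (T * a)) (by positivity)
    rw [Real.log_div (by positivity) (by positivity), Real.log_mul (by positivity) (by positivity),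
      Real.log_mul (by positivity) (by positivity)] at this
    have h2 := mul_le_mul_of_nonneg_left this ha.le
    have : a * (c * S / (T * a) - 1) = c * S / T - a := by field_simp
    rw [this] at h2
    linarith
  have h1 := aux a c (a+b) (c+d) ha hc (by positivity) (by positivity)
  have h2 := aux b d (a+b) (c+d) hb hd (by positivity) (by positivity)
  have : c * (a+b) / (c+d) + d * (a+b)/(c+d) = a + b := by field_simp
  linarith

lemma g_int {t : ℝ} (ht : 0 < t) : Integrable (gaussDen t) ∧ ∫ s, gaussDen t s = 1 := by
  have key : gaussDen t = fun s => (Real.sqrt (2 * Real.pi * t ^ 2))⁻¹ *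
      Real.exp (-(1 / (2 * t^2)) * s^2) := by
    ext s
    unfold gaussDen
    congr 2
    ring
  rw [key]
  constructor
  · exact (integrable_exp_neg_mul_sq (by positivity)).const_mul _
  · rw [integral_const_mul, integral_gaussian]
    have : π / (1 / (2 * t^2)) = 2 * π * t^2 := by field_simp
    rw [this, inv_mul_cancel₀ (by positivity)]

lemma per_bdd {f : ℝ → ℝ} {a : ℝ} (ha : 0 < a) (hf : Continuous f) (hp : Function.Periodic f a) :
    ∃ C, ∀ x, ‖f x‖ ≤ C := by
  obtain ⟨C, hC⟩ := (hp.isBounded_of_continuous ha.ne' hf).exists_norm_le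
  exact ⟨C, fun x => hC _ ⟨x, rfl⟩⟩

lemma conv_int {f : ℝ → ℝ} {a t : ℝ} (ha : 0 < a) (ht : 0 < t) (hf : Continuous f)
    (hp : Function.Periodic f a) (x : ℝ) : Integrable (fun s => f (x - s) * gaussDen t s) := by
  obtain ⟨C, hC⟩ := per_bdd ha hf hp
  exact (g_int ht).1.bdd_mul (c := C) (hf.comp (by fun_prop)).aestronglyMeasurable
    (ae_of_all _ fun s => hC _)

lemma conv_fubini {f : ℝ → ℝ} {a t : ℝ} (ha : 0 < a) (ht : 0 < t) (hf : Continuous f)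
    (hp : Function.Periodic f a) :
    IntervalIntegrable (fun x => ∫ s, f (x - s) * gaussDen t s) volume 0 a ∧
    ∫ x in (0:ℝ)..a, ∫ s, f (x - s) * gaussDen t s = ∫ x in (0:ℝ)..a, f x := by
  obtain ⟨C, hC⟩ := per_bdd ha hf hp
  have : IsFiniteMeasure ((volume : Measure ℝ).restrict (Set.uIoc 0 a)) := by
    rw [Set.uIoc_of_le ha.le]; infer_instance
  have hi : Integrable (Function.uncurry fun x s => f (x - s) * gaussDen t s)
      ((volume.restrict (Set.uIoc 0 a)).prod volume) := by
    have h1 : Integrable (fun z : ℝ × ℝ => (1:ℝ) * gaussDen t z.2)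
      ((volume.restrict (Set.uIoc 0 a)).prod volume) :=
      Integrable.mul_prod (f := fun _ => (1:ℝ)) (integrable_const _) (g_int ht).1
    simp only [one_mul] at h1
    exact h1.bdd_mul (f := fun z : ℝ × ℝ => f (z.1 - z.2)) (c := C)
      (hf.comp (by fun_prop)).aestronglyMeasurable (ae_of_all _ fun s => hC _)
  constructor
  · rw [intervalIntegrable_iff]
    exact hi.integral_prod_left
  · rw [intervalIntegral_integral_swap hi]
    have : ∀ s, ∫ x in (0:ℝ)..a, f (x - s) * gaussDen t s =
        (∫ x in (0:ℝ)..a, f x) * gaussDen t s := by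
      intro s
      rw [intervalIntegral.integral_mul_const, intervalIntegral.integral_comp_sub_right]
      congr 1
      have := hp.intervalIntegral_add_eq (0 - s) 0
      rw [zero_add, sub_add_eq_add_sub, zero_add] at this
      exact this
    simp_rw [this]
    rw [integral_const_mul, (g_int ht).2, mul_one]

lemma F_conv {b t e a : ℝ} (ha : 0 < a) (hb : 0 < b) (ht : 0 < t) (he : 0 < e)
    (hh : e^2 = b^2 + t^2) (x : ℝ) :
    ∫ s, aliasedDen b a (x - s) * gaussDen t s = aliasedDen e a x := by
  have hc := fun k : ℤ => g_conv hb ht he hh (x - (k:ℝ) * a)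
  have hs : Summable fun k : ℤ =>
      ∫ s, ‖gaussDen b (x - (k:ℝ) * a - s) * gaussDen t s‖ := by
    refine (g_summable he ha x).congr fun k => ?_
    rw [← (hc k).2]
    congr 1; ext s
    rw [Real.norm_of_nonneg (mul_pos (g_pos hb _) (g_pos ht _)).le]
  have := hasSum_integral_of_summable_integral_norm (fun k => (hc k).1) hs
  have h2 := this.tsum_eq
  simp_rw [fun k => (hc k).2, tsum_mul_right] at h2
  rw [aliasedDen, h2]
  congr 1; ext s
  unfold aliasedDen
  congr 2; ext k
  ring_nf

noncomputable def Psi (σ a x : ℝ) : ℝ :=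
  aliasedDen σ (2*a) x * log (aliasedDen σ (2*a) x) +
  aliasedDen σ (2*a) (x+a) * log (aliasedDen σ (2*a) (x+a)) -
  (aliasedDen σ (2*a) x + aliasedDen σ (2*a) (x+a)) *
    log (aliasedDen σ (2*a) x + aliasedDen σ (2*a) (x+a))

lemma FlogF_cont {σ a : ℝ} (h : 0 < σ) (ha : 0 < a) :
    Continuous fun x => aliasedDen σ a x * log (aliasedDen σ a x) :=
  (F_cont h ha).mul ((F_cont h ha).log fun x => (F_pos h ha x).ne')

lemma Psi_eq {σ a : ℝ} (h : 0 < σ) (ha : 0 < a) : Psi σ a = fun x =>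
    aliasedDen σ (2*a) x * log (aliasedDen σ (2*a) x) +
    aliasedDen σ (2*a) (x+a) * log (aliasedDen σ (2*a) (x+a)) -
    aliasedDen σ a x * log (aliasedDen σ a x) := by
  ext x
  rw [Psi, F_split h ha]

lemma Psi_cont {σ a : ℝ} (h : 0 < σ) (ha : 0 < a) : Continuous (Psi σ a) := by
  rw [Psi_eq h ha]
  have h2 := FlogF_cont h (show 0 < 2*a by positivity)
  exact (h2.add (h2.comp (continuous_add_const a))).sub (FlogF_cont h ha)

lemma Psi_per (σ a : ℝ) : Function.Periodic (Psi σ a) a := by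
  intro x
  have : aliasedDen σ (2*a) (x+a+a) = aliasedDen σ (2*a) x := by
    rw [← F_per σ (2*a) x]; ring_nf
  unfold Psi
  rw [this, add_comm (aliasedDen σ (2*a) (x+a)) (aliasedDen σ (2*a) x)]
  ring

lemma ent_eq {σ a : ℝ} (h : 0 < σ) (ha : 0 < a) :
    aliasedEnt a σ - aliasedEnt (2*a) σ = ∫ x in (0:ℝ)..a, Psi σ a x := by
  have h2 := FlogF_cont h (show 0 < 2*a by positivity)
  have h1 := FlogF_cont h ha
  have h3 := h2.comp (continuous_add_const a)
  simp only [Function.comp_def] at h3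
  have h4 : Continuous fun x => aliasedDen σ (2*a) x * log (aliasedDen σ (2*a) x) +
    aliasedDen σ (2*a) (x+a) * log (aliasedDen σ (2*a) (x+a)) := h2.add h3
  rw [Psi_eq h ha]
  beta_reduce
  rw [intervalIntegral.integral_sub (h4.intervalIntegrable _ _)
    (h1.intervalIntegrable _ _), intervalIntegral.integral_add (h2.intervalIntegrable _ _)
    (h3.intervalIntegrable _ _), intervalIntegral.integral_comp_add_right
      (fun x => aliasedDen σ (2*a) x * log (aliasedDen σ (2*a) x)), zero_add, ← two_mul,
    intervalIntegral.integral_add_adjacent_intervals (h2.intervalIntegrable _ _)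
      (h2.intervalIntegrable _ _)]
  unfold aliasedEnt
  rw [integral_Ico_eq_integral_Ioc, integral_Ico_eq_integral_Ioc,
    ← intervalIntegral.integral_of_le ha.le, ← intervalIntegral.integral_of_le (by positivity)]
  ring

lemma Psi_le {b t e a : ℝ} (ha : 0 < a) (hb : 0 < b) (ht : 0 < t) (he : 0 < e)
    (hh : e^2 = b^2 + t^2) (x : ℝ) :
    Psi e a x ≤ ∫ s, Psi b a (x - s) * gaussDen t s := by
  have h2a : 0 < 2 * a := by positivity
  have hF := F_cont hb h2a
  have hP : Function.Periodic (aliasedDen b (2*a)) (2*a) := F_per b (2*a)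
  set c := aliasedDen e (2*a) x with hc
  set d := aliasedDen e (2*a) (x+a) with hd
  have c0 : 0 < c := F_pos he h2a _
  have d0 : 0 < d := F_pos he h2a _
  have i1 := conv_int h2a ht hF hP x
  have i2 := conv_int h2a ht hF hP (x+a)
  have key : Psi e a x = ∫ s, ((log c - log (c+d)) * (aliasedDen b (2*a) (x - s) * gaussDen t s) +
      (log d - log (c+d)) * (aliasedDen b (2*a) (x + a - s) * gaussDen t s)) := by
    rw [integral_add (i1.const_mul _) (i2.const_mul _), integral_const_mul, integral_const_mul,
      F_conv h2a hb ht he hh, F_conv h2a hb ht he hh, Psi, ← hc, ← hd]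
    ring
  rw [key]
  refine integral_mono ((i1.const_mul _).add (i2.const_mul _))
    (conv_int ha ht (Psi_cont hb ha) (Psi_per b a) x) fun s => ?_
  have hg := gibbs (F_pos hb h2a (x - s)) (F_pos hb h2a (x - s + a)) c0 d0
  have := mul_le_mul_of_nonneg_right hg (g_pos ht s).le
  have e1 : x + a - s = x - s + a := by ring
  simp only [e1]
  unfold Psi
  linarith

/-- per-level capacity degradation: the capacity of the `αℤ/2αℤ` partition
channel at noise level `σ_b` is at least its capacity at noise level `σ_e ≥ σ_b`; hence
the per-level secrecy rate `C(V_i) − C(W_i)` is nonnegative. -/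
theorem partition_capacity_degradation (α σb σe : ℝ) (hα : 0 < α) (hσb : 0 < σb)
    (hbe : σb ≤ σe) :
    aliasedEnt α σb - aliasedEnt (2 * α) σb + Real.log 2 ≥
      aliasedEnt α σe - aliasedEnt (2 * α) σe + Real.log 2 := by
  rcases hbe.eq_or_lt with rfl | hlt
  · exact le_rfl
  have hσe : 0 < σe := hσb.trans hlt
  have hpos : 0 < σe^2 - σb^2 := by nlinarith
  have ht : 0 < √(σe^2 - σb^2) := Real.sqrt_pos.2 hpos
  have hh : σe^2 = σb^2 + √(σe^2 - σb^2)^2 := by rw [Real.sq_sqrt hpos.le]; ring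
  rw [ent_eq hσb hα, ent_eq hσe hα]
  have hf := conv_fubini hα ht (Psi_cont hσb hα) (Psi_per σb α)
  have := intervalIntegral.integral_mono hα.le ((Psi_cont hσe hα).intervalIntegrable 0 α) hf.1
    (fun x => Psi_le hα hσb ht hσe hh x)
  rw [hf.2] at this
  linarith
end
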